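/- Let p be an odd prime and let n ≥ 0. The number of similarity classes of nondegenerate anisotropic quadratic forms in 3 variables integral over ℤ_p whose discriminant ideal equals (pⁿ) is (n² + 4n + 3)/8 if n is odd, and (n² + 2n)/8 if n is even. (Via the correspondence between ternary forms and quaternion orders, this is the number of isomorphism classes of ℤ_p-orders with reduced discriminant (pⁿ) in the division quaternion algebra over ℚ_p.) -/

import Mathlib

/-- The Gram matrix `M_f` of a quadratic form `f` in `n` variables. -/
noncomputable def gramMatrix {R : Type*} [CommRing R] {n : ℕ}
    (f : QuadraticForm R (Fin n → R)) : Matrix (Fin n) (Fin n) R :=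
  Matrix.of fun i j => QuadraticMap.polar f (Pi.single i 1) (Pi.single j 1)

/-- The ideal generated by the coefficients `a_{ij}` of a quadratic form
`f = Σ_{i ≤ j} a_{ij} X_i X_j`. -/
noncomputable def coeffIdeal {R : Type*} [CommRing R] {n : ℕ}
    (f : QuadraticForm R (Fin n → R)) : Ideal R :=
  Ideal.span ((Set.range fun i => f (Pi.single i 1)) ∪
    (Set.range fun ij : Fin n × Fin n =>
      QuadraticMap.polar f (Pi.single ij.1 1) (Pi.single ij.2 1)))

/-- A quadratic form is primitive if the ideal generated by its coefficients is the whole ring. -/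
noncomputable def IsPrimitiveForm {R : Type*} [CommRing R] {n : ℕ}
    (f : QuadraticForm R (Fin n → R)) : Prop :=
  coeffIdeal f = ⊤

/-- Two quadratic forms are similar if a unit multiple of one is isometric to the other. -/
def SimilarForm {R : Type*} [CommRing R] {n : ℕ}
    (f g : QuadraticForm R (Fin n → R)) : Prop :=
  ∃ u : Rˣ, ((u : R) • f).Equivalent g

/-!
Over a discrete valuation ring `R` in which `2` is invertible, every form is diagonal, with
coefficients `uᵢ ϖ ^ kᵢ`. Suppose that `R` is Henselian with finite residue field; then the units
`uᵢ` matter only up to their quadratic characters. Two of the three exponents have the same parity.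
If the form is anisotropic, the third has the other parity, since a nondegenerate ternary form over
a finite field is isotropic, and the first two terms are up to scaling `⟨ϖ ^ e, -ε ϖ ^ e'⟩` with `ε`
a nonsquare unit. So the form is similar to `⟨ϖ ^ e, -ε ϖ ^ e', w ϖ ^ f⟩` with `e ≤ e'`.

Conversely, the terms of such a form cannot cancel: the valuation of a value and the quadratic
character of its leading unit are those of its dominant part. Hence the form is anisotropic, and
its values determine `e`, `f` and, when `e < e'`, the character of `w`. When `e = e'`, the binary
part is a multiple of an unramified norm form, similitudes of which make `w = 1`.

The classes with `e + e' + f = n` are thus counted by the pairs `(a, b)` of numbers of parity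
opposite to `n` with `a + b ≤ n`: take `{e, e'} = {a, b}` and let the order of `a` and `b` tell the
character of `w`.
-/

open IsLocalRing
open QuadraticMap (polar weightedSumSquares)

section ResidueCharacter

variable {R : Type*} [CommRing R]

theorem ringChar_residueField_ne_two [IsLocalRing R] (h2 : IsUnit (2 : R)) :
    ringChar (ResidueField R) ≠ 2 := by
  intro h
  refine (residue_ne_zero_iff_isUnit _).2 h2 ?_
  rw [map_ofNat]
  exact_mod_cast h ▸ ringChar.Nat.cast_ringChar (R := ResidueField R)

section Local

variable [IsLocalRing R] [Finite (ResidueField R)]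

open Classical in
/-- The quadratic character of the residue field, as a character of the units of a local ring. -/
noncomputable def residueChar : Rˣ →* ℤˣ :=
  letI := Fintype.ofFinite (ResidueField R)
  (quadraticChar (ResidueField R) : MulChar (ResidueField R) ℤ).toUnitHom.comp
    (Units.map (residue R).toMonoidHom)

theorem residueChar_eq_one_iff {u : Rˣ} : residueChar u = 1 ↔ IsSquare (residue R u) := by
  classical
  let := Fintype.ofFinite (ResidueField R)
  rw [← quadraticChar_one_iff_isSquare ((residue_ne_zero_iff_isUnit _).2 u.isUnit), Units.ext_iff]
  rfl

theorem residueChar_congr {u v : Rˣ} (h : residue R u = residue R v) :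
    residueChar u = residueChar v := by
  have huv : Units.map (residue R).toMonoidHom u = Units.map (residue R).toMonoidHom v :=
    Units.ext h
  rw [residueChar, MonoidHom.comp_apply, MonoidHom.comp_apply, huv]

theorem residueChar_sq (u : Rˣ) : residueChar (u ^ 2) = 1 := by
  rw [map_pow, Int.units_sq]

theorem residueChar_surjective (h2 : IsUnit (2 : R)) :
    Function.Surjective (residueChar (R := R)) := by
  intro c
  obtain rfl | rfl := Int.units_eq_one_or c
  · exact ⟨1, map_one _⟩
  obtain ⟨a, ha⟩ := FiniteField.exists_nonsquare (ringChar_residueField_ne_two h2)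
  obtain ⟨x, rfl⟩ := residue_surjective a
  obtain ⟨u, rfl⟩ : IsUnit x := by
    rw [← residue_ne_zero_iff_isUnit]
    exact fun h => ha (h ▸ IsSquare.zero)
  exact ⟨u, (Int.units_eq_one_or _).resolve_left (mt residueChar_eq_one_iff.1 ha)⟩

theorem isUnit_sq_sub_mul_sq {ε : Rˣ} (hε : residueChar ε = -1) {x y : R}
    (h : IsUnit x ∨ IsUnit y) : IsUnit (x ^ 2 - ε * y ^ 2) := by
  have hsq : ¬ IsSquare (residue R ε) := by
    rw [← residueChar_eq_one_iff, hε]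
    decide
  simp only [← residue_ne_zero_iff_isUnit] at h ⊢
  contrapose! h
  rw [map_sub, map_mul, map_pow, map_pow, sub_eq_zero] at h
  have hy : residue R y = 0 := by
    by_contra hy
    exact hsq ⟨residue R x / residue R y, by field_simp; exact h.symm⟩
  exact ⟨by simpa [hy] using h, hy⟩

end Local

section Henselian

variable [IsLocalRing R] [HenselianRing R (maximalIdeal R)]

theorem exists_sq_eq_of_isSquare_residue (h2 : IsUnit (2 : R)) {u : Rˣ}
    (hu : IsSquare (residue R u)) : ∃ c : Rˣ, c ^ 2 = u := by
  obtain ⟨a, ha⟩ := hu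
  obtain ⟨x, rfl⟩ := residue_surjective a
  have hx : IsUnit x := by
    have := (residue_ne_zero_iff_isUnit _).2 u.isUnit
    rw [ha] at this
    exact (residue_ne_zero_iff_isUnit _).1 (left_ne_zero_of_mul this)
  obtain ⟨c, hc, -⟩ := HenselianRing.is_henselian (I := maximalIdeal R)
    (Polynomial.X ^ 2 - Polynomial.C (u : R)) (Polynomial.monic_X_pow_sub_C _ two_ne_zero) x
    (by rw [← residue_eq_zero_iff]; simp [ha, pow_two])
    (by simpa [one_add_one_eq_two] using ⟨h2.map (residue R), hx.map (residue R)⟩)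
  have hcu : c ^ 2 = u := by simpa [sub_eq_zero] using hc
  obtain ⟨c, rfl⟩ := (isUnit_pow_iff two_ne_zero).1 (hcu ▸ u.isUnit)
  exact ⟨c, Units.ext hcu⟩

variable [Finite (ResidueField R)]

theorem exists_eq_mul_sq_of_residueChar_eq (h2 : IsUnit (2 : R)) {u v : Rˣ}
    (h : residueChar u = residueChar v) : ∃ c : Rˣ, u = v * c ^ 2 := by
  obtain ⟨c, hc⟩ := exists_sq_eq_of_isSquare_residue h2 (u := u / v)
    (residueChar_eq_one_iff.1 (by rw [map_div, h, div_self']))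
  exact ⟨c, by rw [hc, mul_div_cancel]⟩

theorem exists_mul_sq_add_mul_sq_eq (h2 : IsUnit (2 : R)) (u v t : Rˣ) :
    ∃ x y : R, u * x ^ 2 + v * y ^ 2 = t := by
  let := Fintype.ofFinite (ResidueField R)
  have residue_ne_zero (r : Rˣ) := (residue_ne_zero_iff_isUnit (r : R)).2 r.isUnit
  obtain ⟨a, b, hab⟩ := FiniteField.exists_root_sum_quadratic
    (Polynomial.degree_quadratic (b := 0) (c := 0) (residue_ne_zero u))
    (Polynomial.degree_quadratic (b := 0) (c := -residue R t) (residue_ne_zero v))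
    (FiniteField.odd_card_of_char_ne_two (ringChar_residueField_ne_two h2))
  obtain ⟨x, rfl⟩ := residue_surjective a
  obtain ⟨y, rfl⟩ := residue_surjective b
  have hres : residue R (u * x ^ 2 + v * y ^ 2) = residue R t := by
    simpa [add_neg_eq_zero, ← add_assoc] using hab
  obtain ⟨s, hs⟩ : IsUnit (u * x ^ 2 + v * y ^ 2) := by
    rw [← residue_ne_zero_iff_isUnit, hres]
    exact residue_ne_zero t
  obtain ⟨c, rfl⟩ := exists_eq_mul_sq_of_residueChar_eq h2
    (residueChar_congr (u := t) (v := s) (by rw [hs, hres]))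
  refine ⟨x * c, y * c, ?_⟩
  push_cast [hs]
  ring

end Henselian

end ResidueCharacter

section Similarity

variable {R : Type*} [CommRing R] {n : ℕ}

theorem equivalent_smul {f g : QuadraticForm R (Fin n → R)} (h : f.Equivalent g) (u : R) :
    (u • f).Equivalent (u • g) := by
  obtain ⟨φ⟩ := h
  exact ⟨⟨φ.toLinearEquiv, fun x => congrArg (u • ·) (φ.map_app x)⟩⟩

theorem similarForm_of_equivalent {f g : QuadraticForm R (Fin n → R)} (h : f.Equivalent g) :
    SimilarForm f g :=
  ⟨1, by simpa using h⟩

theorem similarForm_equivalence : Equivalence (SimilarForm (R := R) (n := n)) where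
  refl f := similarForm_of_equivalent (.refl f)
  symm := by
    rintro f g ⟨u, h⟩
    refine ⟨u⁻¹, ?_⟩
    simpa [smul_smul] using (equivalent_smul h (u⁻¹ : Rˣ)).symm
  trans := by
    rintro f g k ⟨u, hfg⟩ ⟨v, hgk⟩
    refine ⟨v * u, ?_⟩
    rw [Units.val_mul, mul_smul]
    exact (equivalent_smul hfg v).trans hgk

theorem anisotropic_of_equivalent {f g : QuadraticForm R (Fin n → R)} (h : f.Equivalent g)
    (hf : f.Anisotropic) : g.Anisotropic := by
  obtain ⟨φ⟩ := h.symm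
  exact fun x hx => φ.toLinearEquiv.map_eq_zero_iff.1 (hf _ ((φ.map_app x).trans hx))

theorem gramMatrix_eq_toMatrix (f : QuadraticForm R (Fin n → R)) :
    gramMatrix f = LinearMap.toMatrix₂' R f.polarBilin := by
  ext i j
  simp [gramMatrix, LinearMap.toMatrix₂'_apply]

theorem det_gramMatrix_comp (f : QuadraticForm R (Fin n → R))
    (l : (Fin n → R) →ₗ[R] (Fin n → R)) :
    (gramMatrix (f.comp l)).det = (gramMatrix f).det * LinearMap.det l ^ 2 := by
  rw [gramMatrix_eq_toMatrix, gramMatrix_eq_toMatrix, QuadraticMap.polarBilin_comp,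
    LinearMap.toMatrix₂'_compl₁₂, Matrix.det_mul, Matrix.det_mul, Matrix.det_transpose,
    LinearMap.det_toMatrix']
  ring

theorem associated_det_gramMatrix_of_equivalent {f g : QuadraticForm R (Fin n → R)}
    (h : f.Equivalent g) : Associated (gramMatrix f).det (gramMatrix g).det := by
  obtain ⟨φ⟩ := h
  have hf : f = g.comp φ.toLinearEquiv.toLinearMap := by
    ext x
    exact (φ.map_app x).symm
  rw [hf, det_gramMatrix_comp]
  exact associated_mul_unit_left _ _ (φ.toLinearEquiv.isUnit_det'.pow 2)

theorem associated_det_gramMatrix_of_similarForm {f g : QuadraticForm R (Fin n → R)}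
    (h : SimilarForm f g) : Associated (gramMatrix f).det (gramMatrix g).det := by
  obtain ⟨u, h⟩ := h
  have hsmul : gramMatrix ((u : R) • f) = (u : R) • gramMatrix f := by
    ext i j
    simp [gramMatrix, QuadraticMap.polar_smul]
  refine .trans ?_ (associated_det_gramMatrix_of_equivalent h)
  rw [hsmul, Matrix.det_smul]
  exact associated_unit_mul_right _ _ (u.isUnit.pow _)

end Similarity

section WeightedSumSquares

variable {R : Type*} [CommRing R] {ι : Type*} [Fintype ι]

theorem weightedSumSquares_comp_equiv_equivalent (w : ι → R) (σ : ι ≃ ι) :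
    (weightedSumSquares R (w ∘ σ)).Equivalent (weightedSumSquares R w) :=
  ⟨⟨LinearEquiv.funCongrLeft R R σ.symm, fun x => by
    simp only [QuadraticMap.weightedSumSquares_apply]
    rw [← σ.sum_comp]
    simp [LinearMap.funLeft_apply]⟩⟩

theorem polar_weightedSumSquares (w x y : ι → R) :
    polar (weightedSumSquares R w) x y = ∑ i, 2 * w i * (x i * y i) := by
  simp only [polar, QuadraticMap.weightedSumSquares_apply, ← Finset.sum_sub_distrib]
  refine Finset.sum_congr rfl fun i _ => ?_
  simp only [Pi.add_apply, smul_eq_mul]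
  ring

theorem det_gramMatrix_weightedSumSquares {n : ℕ} (w : Fin n → R) :
    (gramMatrix (weightedSumSquares R w)).det = 2 ^ n * ∏ i, w i := by
  have hdiag : gramMatrix (weightedSumSquares R w) = Matrix.diagonal fun i => 2 * w i := by
    ext i j
    obtain rfl | hij := eq_or_ne i j
    · simp [gramMatrix, polar_weightedSumSquares, Pi.single_apply]
    · simp [gramMatrix, polar_weightedSumSquares, Pi.single_apply, hij, hij.symm]
  rw [hdiag, Matrix.det_diagonal, Finset.prod_mul_distrib, Finset.prod_const, Finset.card_fin]

theorem not_anisotropic_of_isSquare_neg_mul {w : Fin 3 → R} (h₀ : w 0 ≠ 0)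
    (h : IsSquare (-(w 0 * w 1))) : ¬ (weightedSumSquares R w).Anisotropic := by
  obtain ⟨s, hs⟩ := h
  intro haniso
  have hzero : ![s, w 0, 0] = 0 := haniso _ (by
    simp only [QuadraticMap.weightedSumSquares_apply, Fin.sum_univ_three, smul_eq_mul,
      Matrix.cons_val]
    linear_combination -w 0 * hs)
  exact h₀ (congrFun hzero 1)

/-- `(x, y) ↦ x + y √ε` identifies the binary form `⟨a, -εa⟩` with `a` times the norm form of
`R[√ε]`; multiplying by an element of unit norm scales it by that norm. -/
theorem equivalent_weightedSumSquares_mul_norm {a c ε x y r : R} (hr : IsUnit r)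
    (h : x ^ 2 - ε * y ^ 2 = r) :
    (weightedSumSquares R ![r * a, -ε * (r * a), c]).Equivalent
      (weightedSumSquares R ![a, -ε * a, c]) := by
  subst h
  let P : Matrix (Fin 3) (Fin 3) R := !![x, ε * y, 0; y, x, 0; 0, 0, 1]
  have hP : IsUnit P.det := by
    convert hr using 1
    simp only [P, Matrix.det_fin_three, Matrix.of_apply, Matrix.cons_val]
    ring
  refine ⟨⟨Matrix.toLinearEquiv' P (P.invertibleOfIsUnitDet hP), fun v => ?_⟩⟩
  simp [P, QuadraticMap.weightedSumSquares_apply, Fin.sum_univ_three, dotProduct]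
  ring

end WeightedSumSquares

section Diagonalization

variable {R : Type*} [CommRing R] [IsDomain R]

theorem exists_forall_dvd [IsLocalRing R] [IsPrincipalIdealRing R] {α : Type*} [Nonempty α]
    (φ : α → R) : ∃ a, ∀ b, φ a ∣ φ b := by
  obtain ⟨_, ⟨a, rfl⟩, hmax⟩ := wellFounded_gt.has_min
    (Set.range fun a => Ideal.span {φ a}) (Set.range_nonempty _)
  refine ⟨a, fun b => (ValuationRing.dvd_total (φ a) (φ b)).elim id fun hba => ?_⟩
  have hab := eq_of_le_of_not_lt (Ideal.span_singleton_le_span_singleton.2 hba) (hmax _ ⟨b, rfl⟩)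
  exact Ideal.span_singleton_le_span_singleton.1 hab.ge

variable {M : Type*} [AddCommGroup M] [Module R M]

theorem exists_basis_cons_of_basis_ker {n : ℕ} {ℓ : M →ₗ[R] R} {x : M} (hx : ℓ x ≠ 0)
    (hdvd : ∀ y, ℓ x ∣ ℓ y) (b : Module.Basis (Fin n) R (LinearMap.ker ℓ)) :
    ∃ v : Module.Basis (Fin (n + 1)) R M, ⇑v = Fin.cons x fun i => (b i : M) := by
  refine ⟨.mkFinCons x b ?_ ?_, Module.Basis.coe_mkFinCons ..⟩
  · intro c y hy h
    have := congrArg ℓ h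
    rw [map_add, map_smul, LinearMap.mem_ker.1 hy, add_zero, map_zero, smul_eq_mul] at this
    exact (mul_eq_zero.1 this).resolve_right hx
  · intro z
    obtain ⟨c, hc⟩ := hdvd z
    exact ⟨-c, by rw [LinearMap.mem_ker, map_add, map_smul, hc, smul_eq_mul]; ring⟩

variable [IsPrincipalIdealRing R]

theorem exists_basis_ker {n : ℕ} (v : Module.Basis (Fin (n + 1)) R M) {ℓ : M →ₗ[R] R} {x : M}
    (hx : ℓ x ≠ 0) (hdvd : ∀ y, ℓ x ∣ ℓ y) :
    Nonempty (Module.Basis (Fin n) R (LinearMap.ker ℓ)) := by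
  obtain ⟨k, b⟩ := Submodule.basisOfPid v (LinearMap.ker ℓ)
  obtain ⟨v', -⟩ := exists_basis_cons_of_basis_ker hx hdvd b
  obtain rfl : k = n := by simpa using Fintype.card_congr (v'.indexEquiv v)
  exact ⟨b⟩

/-- A vector whose value generates the ideal of all values of the form splits off. -/
theorem exists_orthogonal_basis [IsLocalRing R] (h2 : IsUnit (2 : R)) {n : ℕ}
    (b : Module.Basis (Fin n) R M) (Q : QuadraticForm R M) :
    ∃ v : Module.Basis (Fin n) R M, Pairwise fun i j => polar Q (v i) (v j) = 0 := by
  induction n generalizing M with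
  | zero => exact ⟨b, fun i => i.elim0⟩
  | succ n ih =>
    obtain ⟨x, hdvd⟩ := exists_forall_dvd Q
    by_cases hx : Q x = 0
    · have hQ (y : M) : Q y = 0 := zero_dvd_iff.1 (hx ▸ hdvd y)
      exact ⟨b, fun i j _ => by simp [polar, hQ]⟩
    have hpolar_self : Q.polarBilin x x = 2 * Q x := by
      simp [QuadraticMap.polar_self]
    have hpolar_ne : Q.polarBilin x x ≠ 0 := hpolar_self ▸ mul_ne_zero h2.ne_zero hx
    have hpolar_dvd (y : M) : Q.polarBilin x x ∣ Q.polarBilin x y := by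
      rw [hpolar_self, h2.mul_left_dvd]
      exact dvd_sub (dvd_sub (hdvd _) (hdvd _)) (hdvd _)
    obtain ⟨bker⟩ := exists_basis_ker b hpolar_ne hpolar_dvd
    obtain ⟨w, hw⟩ := ih bker (Q.comp (LinearMap.ker (Q.polarBilin x)).subtype)
    obtain ⟨v, hv⟩ := exists_basis_cons_of_basis_ker hpolar_ne hpolar_dvd w
    refine ⟨v, ?_⟩
    have hker (i : Fin n) : polar Q x (w i) = 0 := LinearMap.mem_ker.1 (w i).2
    rw [hv, pairwise_fin_succ_iff]
    exact ⟨fun i => by simpa [QuadraticMap.polar_comm] using hker i,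
      fun j => by simpa using hker j, fun i j hij => by simpa [polar] using hw hij⟩

theorem exists_equivalent_weightedSumSquares [IsLocalRing R] (h2 : IsUnit (2 : R)) {n : ℕ}
    (f : QuadraticForm R (Fin n → R)) :
    ∃ w : Fin n → R, f.Equivalent (weightedSumSquares R w) := by
  let := h2.invertible
  obtain ⟨v, hv⟩ := exists_orthogonal_basis h2 (Pi.basisFun R (Fin n)) f
  have hortho : (QuadraticMap.associated (R := R) f).IsOrthoᵢ v := fun i j hij => by
    change QuadraticMap.associated (R := R) f (v i) (v j) = 0
    have := hv hij
    rw [QuadraticMap.associated_apply]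
    simpa [polar] using Or.inr this
  refine ⟨fun i => f (v i), ?_⟩
  rw [← QuadraticMap.basisRepr_eq_of_iIsOrtho f v hortho]
  exact ⟨f.isometryEquivBasisRepr v⟩

end Diagonalization

section LeadingClass

variable {R : Type*} [CommRing R] [IsLocalRing R] [Finite (ResidueField R)] {ϖ x y : R}
  {m m' : ℕ} {c c' : ℤˣ}

/-- `x = u ϖ ^ m` with `u` a unit of quadratic character `c`. When `ϖ` is a uniformizer, this pair
`(m, c)` attached to `x ≠ 0` is the leading term of `x` up to squares. -/
def HasLeadingClass (ϖ x : R) (m : ℕ) (c : ℤˣ) : Prop :=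
  ∃ u : Rˣ, residueChar u = c ∧ x = u * ϖ ^ m

namespace HasLeadingClass

theorem unit_mul_pow (ϖ : R) (u : Rˣ) (m : ℕ) :
    HasLeadingClass ϖ (u * ϖ ^ m) m (residueChar u) :=
  ⟨u, rfl, rfl⟩

theorem pow_dvd (hx : HasLeadingClass ϖ x m c) : ϖ ^ m ∣ x := by
  obtain ⟨u, -, rfl⟩ := hx
  exact dvd_mul_left _ _

theorem mul_sq (hx : HasLeadingClass ϖ x m c) (hy : HasLeadingClass ϖ y m' c') :
    HasLeadingClass ϖ (x * y ^ 2) (m + 2 * m') c := by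
  obtain ⟨u, rfl, rfl⟩ := hx
  obtain ⟨v, rfl, rfl⟩ := hy
  refine ⟨u * v ^ 2, by rw [map_mul, residueChar_sq, mul_one], ?_⟩
  push_cast
  ring

theorem add_of_pow_succ_dvd (hϖ : Irreducible ϖ) (hx : HasLeadingClass ϖ x m c)
    (hy : ϖ ^ (m + 1) ∣ y) : HasLeadingClass ϖ (x + y) m c := by
  obtain ⟨u, rfl, rfl⟩ := hx
  obtain ⟨z, rfl⟩ := hy
  have hres : residue R (u + ϖ * z) = residue R u := by
    rw [map_add, map_mul, (residue_eq_zero_iff ϖ).2 hϖ.not_isUnit, zero_mul, add_zero]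
  obtain ⟨v, hv⟩ : IsUnit ((u : R) + ϖ * z) := by
    rw [← residue_ne_zero_iff_isUnit, hres]
    exact (residue_ne_zero_iff_isUnit _).2 u.isUnit
  refine ⟨v, residueChar_congr (hv ▸ hres), ?_⟩
  rw [hv]
  ring

variable [IsDomain R]

theorem ne_zero (hϖ : Irreducible ϖ) (hx : HasLeadingClass ϖ x m c) : x ≠ 0 := by
  obtain ⟨u, -, rfl⟩ := hx
  exact mul_ne_zero u.ne_zero (pow_ne_zero _ hϖ.ne_zero)

end HasLeadingClass

end LeadingClass

section ValuesOfNormalForms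

variable {R : Type*} [CommRing R] [IsDomain R] [IsDiscreteValuationRing R] {ϖ x y z : R}

namespace HasLeadingClass

variable [Finite (ResidueField R)] {m m' : ℕ} {c c' : ℤˣ}

theorem unique (hϖ : Irreducible ϖ) (hx : HasLeadingClass ϖ x m c)
    (hx' : HasLeadingClass ϖ x m' c') : m = m' ∧ c = c' := by
  obtain ⟨u, rfl, rfl⟩ := hx
  obtain ⟨v, rfl, h⟩ := hx'
  obtain rfl := IsDiscreteValuationRing.unit_mul_pow_congr_pow hϖ hϖ u v m m' h
  exact ⟨rfl, congrArg _ (IsDiscreteValuationRing.unit_mul_pow_congr_unit hϖ u v m m h)⟩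

theorem exists_of_ne_zero (hϖ : Irreducible ϖ) (hx : x ≠ 0) :
    ∃ m c, HasLeadingClass ϖ x m c := by
  obtain ⟨m, u, rfl⟩ := IsDiscreteValuationRing.eq_unit_mul_pow_irreducible hx hϖ
  exact ⟨m, _, unit_mul_pow ϖ u m⟩

end HasLeadingClass

theorem exists_eq_pow_mul_and_isUnit_or_isUnit (hϖ : Irreducible ϖ) (h : x ≠ 0 ∨ y ≠ 0) :
    ∃ d x' y', x = ϖ ^ d * x' ∧ y = ϖ ^ d * y' ∧ (IsUnit x' ∨ IsUnit y') := by
  wlog hxy : x ∣ y generalizing x y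
  · obtain ⟨d, y', x', hy, hx, hunit⟩ := this h.symm
      ((ValuationRing.dvd_total x y).resolve_left hxy)
    exact ⟨d, x', y', hx, hy, hunit.symm⟩
  obtain ⟨z, rfl⟩ := hxy
  have hx : x ≠ 0 := h.elim id left_ne_zero_of_mul
  obtain ⟨d, u, rfl⟩ := IsDiscreteValuationRing.eq_unit_mul_pow_irreducible hx hϖ
  exact ⟨d, u, u * z, mul_comm _ _, by ring, .inl u.isUnit⟩

variable [Finite (ResidueField R)] {ε w : Rˣ} {e e' f : ℕ}

theorem exists_hasLeadingClass_binary (hϖ : Irreducible ϖ) (hε : residueChar ε = -1) (hle : e ≤ e')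
    (hmod : e % 2 = e' % 2) (h : x ≠ 0 ∨ y ≠ 0) :
    ∃ m c, HasLeadingClass ϖ (ϖ ^ e * x ^ 2 - ε * ϖ ^ e' * y ^ 2) m c ∧
      m % 2 = e % 2 ∧ e ≤ m ∧ (m = e → e < e' → c = 1) := by
  obtain ⟨k, rfl⟩ : ∃ k, e' = e + 2 * k := ⟨(e' - e) / 2, by omega⟩
  obtain ⟨d, x', y', hx, hy, hunit⟩ := exists_eq_pow_mul_and_isUnit_or_isUnit hϖ
    (x := x) (y := ϖ ^ k * y) (h.imp_right (mul_ne_zero (pow_ne_zero k hϖ.ne_zero)))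
  obtain ⟨v, hv⟩ := isUnit_sq_sub_mul_sq hε hunit
  have hvalue : ϖ ^ e * x ^ 2 - ε * ϖ ^ (e + 2 * k) * y ^ 2 = v * ϖ ^ (e + 2 * d) := by
    rw [hv, show ϖ ^ e * x ^ 2 - ε * ϖ ^ (e + 2 * k) * y ^ 2 =
      ϖ ^ e * (x ^ 2 - ε * (ϖ ^ k * y) ^ 2) by ring, hx, hy]
    ring
  rw [hvalue]
  refine ⟨e + 2 * d, _, .unit_mul_pow ϖ v _, by omega, by omega, fun hd hk => ?_⟩
  obtain rfl : d = 0 := by omega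
  have hy' : residue R y' = 0 := by
    rw [pow_zero, one_mul] at hy
    rw [residue_eq_zero_iff, ← hy, show k = k - 1 + 1 by omega, pow_succ', mul_assoc]
    exact Ideal.mul_mem_right _ _ hϖ.not_isUnit
  rw [residueChar_eq_one_iff, hv]
  exact ⟨residue R x', by simp [hy', pow_two]⟩

theorem exists_hasLeadingClass_ternary (hϖ : Irreducible ϖ) (hε : residueChar ε = -1)
    (hle : e ≤ e') (hmod : e % 2 = e' % 2) (hf : f % 2 ≠ e % 2) (h : x ≠ 0 ∨ y ≠ 0 ∨ z ≠ 0) :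
    ∃ m c, HasLeadingClass ϖ (ϖ ^ e * x ^ 2 - ε * ϖ ^ e' * y ^ 2 + w * ϖ ^ f * z ^ 2) m c ∧
      (m % 2 = e % 2 ∧ e ≤ m ∧ (m = e → e < e' → c = 1) ∨
        m % 2 = f % 2 ∧ f ≤ m ∧ c = residueChar w) := by
  by_cases hz : z = 0
  · obtain ⟨m, c, hclass, hmc⟩ := exists_hasLeadingClass_binary hϖ hε hle hmod
      (h.imp_right fun h => h.resolve_right (not_not_intro hz))
    exact ⟨m, c, by simpa [hz] using hclass, .inl hmc⟩
  obtain ⟨a, s, hzclass⟩ := HasLeadingClass.exists_of_ne_zero hϖ hz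
  have hthird := (HasLeadingClass.unit_mul_pow ϖ w f).mul_sq hzclass
  by_cases hxy : x = 0 ∧ y = 0
  · exact ⟨f + 2 * a, _, by simpa [hxy] using hthird, .inr ⟨by omega, by omega, rfl⟩⟩
  obtain ⟨m, c, hclass, hm, hmc⟩ := exists_hasLeadingClass_binary hϖ hε hle hmod
    (not_and_or.1 hxy)
  obtain hlt | hlt : m < f + 2 * a ∨ f + 2 * a < m := by omega
  · exact ⟨m, c, hclass.add_of_pow_succ_dvd hϖ ((pow_dvd_pow ϖ hlt).trans hthird.pow_dvd),
      .inl ⟨hm, hmc⟩⟩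
  · refine ⟨f + 2 * a, _, ?_, .inr ⟨by omega, by omega, rfl⟩⟩
    rw [add_comm]
    exact hthird.add_of_pow_succ_dvd hϖ ((pow_dvd_pow ϖ hlt).trans hclass.pow_dvd)

end ValuesOfNormalForms

section DiagonalForms

/-- The diagonal form with coefficients `uᵢ ϖ ^ kᵢ`, which is what diagonal forms of nonzero
determinant look like when `ϖ` is a uniformizer. -/
noncomputable def diagForm {R : Type*} [CommRing R] {n : ℕ} (ϖ : R) (k : Fin n → ℕ)
    (u : Fin n → Rˣ) : QuadraticForm R (Fin n → R) :=
  weightedSumSquares R fun i => (u i : R) * ϖ ^ k i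

section CommRing

variable {R : Type*} [CommRing R] {n : ℕ} {ϖ : R} {k : Fin n → ℕ} {u v : Fin n → Rˣ}

theorem smul_diagForm (s : Rˣ) : (s : R) • diagForm ϖ k u = diagForm ϖ k fun i => s * u i := by
  ext x
  simp [diagForm, QuadraticMap.weightedSumSquares_apply, Finset.mul_sum, mul_assoc]

theorem associated_det_gramMatrix_diagForm (h2 : IsUnit (2 : R)) :
    Associated (gramMatrix (diagForm ϖ k u)).det (ϖ ^ ∑ i, k i) := by
  rw [diagForm, det_gramMatrix_weightedSumSquares, Finset.prod_mul_distrib,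
    Finset.prod_pow_eq_pow_sum, ← mul_assoc]
  refine (associated_unit_mul_left _ _ ((h2.pow n).mul ?_))
  exact_mod_cast (∏ i, u i).isUnit

theorem exists_equivalent_diagForm [IsDomain R] [IsDiscreteValuationRing R] (h2 : IsUnit (2 : R))
    (hϖ : Irreducible ϖ) {f : QuadraticForm R (Fin n → R)} (hf : (gramMatrix f).det ≠ 0) :
    ∃ (k : Fin n → ℕ) (u : Fin n → Rˣ), f.Equivalent (diagForm ϖ k u) := by
  obtain ⟨w, hw⟩ := exists_equivalent_weightedSumSquares h2 f
  have hdet : (2 : R) ^ n * ∏ i, w i ≠ 0 := by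
    rw [← det_gramMatrix_weightedSumSquares]
    exact (associated_det_gramMatrix_of_equivalent hw).ne_zero_iff.1 hf
  have hw_ne (i : Fin n) : w i ≠ 0 :=
    Finset.prod_ne_zero_iff.1 (right_ne_zero_of_mul hdet) i (Finset.mem_univ i)
  choose k u hku using fun i =>
    IsDiscreteValuationRing.eq_unit_mul_pow_irreducible (hw_ne i) hϖ
  exact ⟨k, u, by rwa [diagForm, ← funext hku]⟩

theorem not_anisotropic_diagForm_of_isSquare_neg_mul [IsDomain R] {k : Fin 3 → ℕ}
    {u : Fin 3 → Rˣ} (hϖ : ϖ ≠ 0) (hk : k 0 % 2 = k 1 % 2) (hu : IsSquare (-(u 0 * u 1))) :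
    ¬ (diagForm ϖ k u).Anisotropic := by
  refine not_anisotropic_of_isSquare_neg_mul
    (mul_ne_zero (u 0).ne_zero (pow_ne_zero (k 0) hϖ)) ?_
  have hϖsq : IsSquare (ϖ ^ (k 0 + k 1)) := (Nat.even_iff.2 (by omega)).isSquare_pow ϖ
  have hmul : ((-(u 0 * u 1) : Rˣ) : R) * ϖ ^ (k 0 + k 1) =
      -(u 0 * ϖ ^ k 0 * (u 1 * ϖ ^ k 1)) := by
    push_cast
    ring
  exact hmul ▸ (hu.map (Units.coeHom R)).mul hϖsq

theorem exists_perm_mod_two_eq_and_le (k : Fin 3 → ℕ) :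
    ∃ σ : Equiv.Perm (Fin 3), k (σ 0) % 2 = k (σ 1) % 2 ∧ k (σ 0) ≤ k (σ 1) := by
  obtain ⟨i, j, hij, hmod⟩ := Fintype.exists_ne_map_eq_of_card_lt
    (fun i => (⟨k i % 2, Nat.mod_lt _ two_pos⟩ : Fin 2)) (by decide)
  wlog hle : k i ≤ k j generalizing i j
  · exact this j i hij.symm hmod.symm (by omega)
  have hperm : ∀ i j : Fin 3, i ≠ j → ∃ σ : Equiv.Perm (Fin 3), σ 0 = i ∧ σ 1 = j := by decide
  obtain ⟨σ, rfl, rfl⟩ := hperm i j hij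
  exact ⟨σ, congrArg Fin.val hmod, hle⟩

end CommRing

section Henselian

variable {R : Type*} [CommRing R] [IsLocalRing R] [HenselianRing R (maximalIdeal R)]
  [Finite (ResidueField R)] {ϖ : R}

theorem diagForm_equivalent_of_residueChar_eq (h2 : IsUnit (2 : R)) {n : ℕ} {k : Fin n → ℕ}
    {u v : Fin n → Rˣ} (h : ∀ i, residueChar (u i) = residueChar (v i)) :
    (diagForm ϖ k u).Equivalent (diagForm ϖ k v) := by
  choose c hc using fun i => exists_eq_mul_sq_of_residueChar_eq h2 (h i)
  refine ⟨QuadraticForm.isometryEquivWeightedSumSquaresWeightedSumSquares c fun i => ?_⟩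
  rw [hc i]
  push_cast
  ring

theorem similarForm_diagForm_of_residueChar_eq_mul (h2 : IsUnit (2 : R)) {n : ℕ} {k : Fin n → ℕ}
    {u v : Fin n → Rˣ} (c : ℤˣ) (h : ∀ i, residueChar (v i) = c * residueChar (u i)) :
    SimilarForm (diagForm ϖ k u) (diagForm ϖ k v) := by
  obtain ⟨s, rfl⟩ := residueChar_surjective h2 c
  refine ⟨s, ?_⟩
  rw [smul_diagForm]
  exact diagForm_equivalent_of_residueChar_eq h2 fun i => by rw [map_mul, h]

theorem not_anisotropic_diagForm_of_forall_mod_two_eq [IsDomain R] (h2 : IsUnit (2 : R))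
    (hϖ : ϖ ≠ 0) {k : Fin 3 → ℕ} {u : Fin 3 → Rˣ} (h₁ : k 0 % 2 = k 1 % 2)
    (h₂ : k 0 % 2 = k 2 % 2) : ¬ (diagForm ϖ k u).Anisotropic := by
  obtain ⟨x, y, hxy⟩ := exists_mul_sq_add_mul_sq_eq h2 (u 0) (u 1) (-u 2)
  obtain ⟨l, hl⟩ : ∃ l, k 1 + k 2 = l * 2 := ⟨(k 1 + k 2) / 2, by omega⟩
  obtain ⟨m, hm⟩ : ∃ m, k 0 + k 2 = m * 2 := ⟨(k 0 + k 2) / 2, by omega⟩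
  obtain ⟨r, hr⟩ : ∃ r, k 0 + k 1 = r * 2 := ⟨(k 0 + k 1) / 2, by omega⟩
  have hpow (a b : ℕ) (h : a + 2 * b = k 0 + k 1 + k 2) :
      ϖ ^ a * (ϖ ^ b) ^ 2 = ϖ ^ (k 0 + k 1 + k 2) := by
    rw [← h]
    ring
  intro haniso
  have hzero : ![ϖ ^ l * x, ϖ ^ m * y, ϖ ^ r] = 0 := haniso _ (by
    simp only [diagForm, QuadraticMap.weightedSumSquares_apply, Fin.sum_univ_three, smul_eq_mul,
      Matrix.cons_val]
    push_cast at hxy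
    linear_combination ϖ ^ (k 0 + k 1 + k 2) * hxy + u 0 * x ^ 2 * hpow (k 0) l (by omega) +
      u 1 * y ^ 2 * hpow (k 1) m (by omega) + u 2 * hpow (k 2) r (by omega))
  exact pow_ne_zero r hϖ (congrFun hzero 2)

theorem residueChar_eq_neg_one_of_anisotropic [IsDomain R] (h2 : IsUnit (2 : R)) (hϖ : ϖ ≠ 0)
    {k : Fin 3 → ℕ} {u : Fin 3 → Rˣ} (hk : k 0 % 2 = k 1 % 2)
    (haniso : (diagForm ϖ k u).Anisotropic) : residueChar (-(u 0 * u 1)) = -1 := by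
  refine (Int.units_eq_one_or _).resolve_left fun h => ?_
  obtain ⟨c, hc⟩ := exists_sq_eq_of_isSquare_residue h2 (residueChar_eq_one_iff.1 h)
  exact not_anisotropic_diagForm_of_isSquare_neg_mul hϖ hk ⟨c, by rw [← hc, pow_two]⟩ haniso

end Henselian

end DiagonalForms

section NormalForms

/-- The diagonal form `⟨ϖ ^ e, -ε ϖ ^ e', w ϖ ^ f⟩`. When `ε` is a nonsquare unit, `e ≤ e'` have the
same parity and `f` has the other one, this is the normal form of an anisotropic ternary form up to
similarity. -/
noncomputable def normalForm {R : Type*} [CommRing R] (ϖ : R) (ε : Rˣ) (e e' f : ℕ) (w : Rˣ) :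
    QuadraticForm R (Fin 3 → R) :=
  diagForm ϖ ![e, e', f] ![1, -ε, w]

theorem normalForm_apply {R : Type*} [CommRing R] {ϖ : R} {ε w : Rˣ} {e e' f : ℕ}
    (x : Fin 3 → R) : normalForm ϖ ε e e' f w x =
      ϖ ^ e * x 0 ^ 2 - ε * ϖ ^ e' * x 1 ^ 2 + w * ϖ ^ f * x 2 ^ 2 := by
  simp only [normalForm, diagForm, QuadraticMap.weightedSumSquares_apply, Fin.sum_univ_three,
    smul_eq_mul, Matrix.cons_val, Units.val_one, Units.val_neg]
  ring

theorem associated_det_gramMatrix_normalForm {R : Type*} [CommRing R] (h2 : IsUnit (2 : R))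
    {ϖ : R} {ε w : Rˣ} {e e' f : ℕ} :
    Associated (gramMatrix (normalForm ϖ ε e e' f w)).det (ϖ ^ (e + e' + f)) := by
  simpa [normalForm, Fin.sum_univ_three] using
    associated_det_gramMatrix_diagForm (k := ![e, e', f]) (u := ![1, -ε, w]) h2

section DiscreteValuationRing

variable {R : Type*} [CommRing R] [IsDomain R] [IsDiscreteValuationRing R]
  [Finite (ResidueField R)] {ϖ : R} {ε w : Rˣ} {e e' f : ℕ}

theorem exists_hasLeadingClass_normalForm (hϖ : Irreducible ϖ) (hε : residueChar ε = -1)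
    (hle : e ≤ e') (hmod : e % 2 = e' % 2) (hf : f % 2 ≠ e % 2) {x : Fin 3 → R} (hx : x ≠ 0) :
    ∃ m c, HasLeadingClass ϖ (normalForm ϖ ε e e' f w x) m c ∧
      (m % 2 = e % 2 ∧ e ≤ m ∧ (m = e → e < e' → c = 1) ∨
        m % 2 = f % 2 ∧ f ≤ m ∧ c = residueChar w) := by
  rw [normalForm_apply]
  refine exists_hasLeadingClass_ternary hϖ hε hle hmod hf ?_
  contrapose! hx
  ext i
  fin_cases i <;> simp [hx]

theorem anisotropic_normalForm (hϖ : Irreducible ϖ) (hε : residueChar ε = -1)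
    (hle : e ≤ e') (hmod : e % 2 = e' % 2) (hf : f % 2 ≠ e % 2) :
    (normalForm ϖ ε e e' f w).Anisotropic := by
  intro x hzero
  by_contra hx
  obtain ⟨m, c, hclass, -⟩ := exists_hasLeadingClass_normalForm (w := w) hϖ hε hle hmod hf hx
  exact hclass.ne_zero hϖ hzero

variable {e₁ e₁' f₁ e₂ e₂' f₂ : ℕ} {w₁ w₂ : Rˣ}

theorem le_of_similarForm_normalForm (hϖ : Irreducible ϖ) (hε : residueChar ε = -1)
    (hle : e₂ ≤ e₂') (hmod : e₂ % 2 = e₂' % 2) (hf : f₂ % 2 ≠ e₂ % 2)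
    (he₁₂ : e₁ % 2 = e₂ % 2) (hf₁₂ : f₁ % 2 = f₂ % 2)
    (h : SimilarForm (normalForm ϖ ε e₁ e₁' f₁ w₁) (normalForm ϖ ε e₂ e₂' f₂ w₂)) :
    e₂ ≤ e₁ ∧ f₂ ≤ f₁ ∧ (e₁ = e₂ → e₂ < e₂' → residueChar w₁ = residueChar w₂) := by
  obtain ⟨s, ⟨φ⟩⟩ := h
  have value_eq (i : Fin 3) : normalForm ϖ ε e₂ e₂' f₂ w₂ (φ (Pi.single i 1)) =
      s * normalForm ϖ ε e₁ e₁' f₁ w₁ (Pi.single i 1) := φ.map_app _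
  have ne_zero (i : Fin 3) : φ (Pi.single i 1) ≠ 0 :=
    φ.toLinearEquiv.map_ne_zero_iff.2 (Pi.single_ne_zero_iff.2 one_ne_zero)
  obtain ⟨m, c, hfirst, hmc⟩ := exists_hasLeadingClass_normalForm (w := w₂) hϖ hε hle hmod hf
    (ne_zero 0)
  obtain ⟨rfl, rfl⟩ := hfirst.unique hϖ (m' := e₁) (c' := residueChar s)
    ⟨s, rfl, by simp [value_eq, normalForm_apply]⟩
  obtain ⟨m', c', hthird, hmc'⟩ := exists_hasLeadingClass_normalForm (w := w₂) hϖ hε hle hmod hf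
    (ne_zero 2)
  obtain ⟨rfl, rfl⟩ := hthird.unique hϖ (m' := f₁) (c' := residueChar (s * w₁))
    ⟨s * w₁, rfl, by simp [value_eq, normalForm_apply, mul_assoc]⟩
  obtain ⟨-, hle_e, hs⟩ := hmc.resolve_right (by omega)
  obtain ⟨-, hle_f, hw⟩ := hmc'.resolve_left (by omega)
  refine ⟨hle_e, hle_f, fun he hlt => ?_⟩
  rw [← hw, map_mul, hs he hlt, one_mul]

theorem eq_of_similarForm_normalForm (hϖ : Irreducible ϖ) (hε : residueChar ε = -1)
    (hle₁ : e₁ ≤ e₁') (hmod₁ : e₁ % 2 = e₁' % 2) (hf₁ : f₁ % 2 ≠ e₁ % 2)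
    (hle₂ : e₂ ≤ e₂') (hmod₂ : e₂ % 2 = e₂' % 2) (hf₂ : f₂ % 2 ≠ e₂ % 2)
    (hf₁₂ : f₁ % 2 = f₂ % 2)
    (h : SimilarForm (normalForm ϖ ε e₁ e₁' f₁ w₁) (normalForm ϖ ε e₂ e₂' f₂ w₂)) :
    e₁ = e₂ ∧ f₁ = f₂ ∧ (e₂ < e₂' → residueChar w₁ = residueChar w₂) := by
  obtain ⟨he, hf, hw⟩ :=
    le_of_similarForm_normalForm hϖ hε hle₂ hmod₂ hf₂ (by omega) hf₁₂ h
  obtain ⟨he', hf', -⟩ := le_of_similarForm_normalForm hϖ hε hle₁ hmod₁ hf₁ (by omega) hf₁₂.symm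
    (similarForm_equivalence.symm h)
  exact ⟨by omega, by omega, hw (by omega)⟩

end DiscreteValuationRing

section Henselian

variable {R : Type*} [CommRing R] [IsLocalRing R] [HenselianRing R (maximalIdeal R)]
  [Finite (ResidueField R)] {ϖ : R} {ε : Rˣ}

theorem similarForm_normalForm_self (h2 : IsUnit (2 : R)) (e f : ℕ) (w : Rˣ) :
    SimilarForm (normalForm ϖ ε e e f 1) (normalForm ϖ ε e e f w) := by
  obtain ⟨x, y, hxy⟩ := exists_mul_sq_add_mul_sq_eq h2 1 (-ε) w
  refine ⟨w, ?_⟩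
  rw [normalForm, normalForm, smul_diagForm, diagForm, diagForm]
  convert equivalent_weightedSumSquares_mul_norm (a := ϖ ^ e) (c := w * ϖ ^ f) (x := x) (y := y)
    (ε := (ε : R)) w.isUnit (by push_cast at hxy; linear_combination hxy) using 2 <;>
  · ext i
    fin_cases i <;> simp <;> ring

theorem similarForm_normalForm_of_residueChar_eq (h2 : IsUnit (2 : R)) (hε : residueChar ε = -1)
    {k : Fin 3 → ℕ} {u : Fin 3 → Rˣ} {w : Rˣ} (hu : residueChar (-(u 0 * u 1)) = -1)
    (hw : residueChar w = residueChar (u 0) * residueChar (u 2)) :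
    SimilarForm (diagForm ϖ k u) (normalForm ϖ ε (k 0) (k 1) (k 2) w) := by
  have hk : k = ![k 0, k 1, k 2] := by
    ext i
    fin_cases i <;> rfl
  rw [normalForm, ← hk]
  refine similarForm_diagForm_of_residueChar_eq_mul h2 (residueChar (u 0)) fun i => ?_
  fin_cases i
  · simp
  · change residueChar (-ε) = residueChar (u 0) * residueChar (u 1)
    rw [neg_eq_neg_one_mul, map_mul, map_mul] at hu
    rw [neg_eq_neg_one_mul, map_mul, hε, ← hu, ← mul_assoc, Int.units_mul_self, one_mul]
  · exact hw

end Henselian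

section HenselianDiscreteValuationRing

variable {R : Type*} [CommRing R] [IsDomain R] [IsDiscreteValuationRing R]
  [HenselianRing R (maximalIdeal R)] [Finite (ResidueField R)] {ϖ : R} {ε : Rˣ}

theorem exists_equivalent_diagForm_of_anisotropic (h2 : IsUnit (2 : R)) (hϖ : Irreducible ϖ)
    {q : QuadraticForm R (Fin 3 → R)} (hdet : (gramMatrix q).det ≠ 0) (haniso : q.Anisotropic) :
    ∃ (k : Fin 3 → ℕ) (u : Fin 3 → Rˣ), q.Equivalent (diagForm ϖ k u) ∧ k 0 ≤ k 1 ∧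
      k 0 % 2 = k 1 % 2 ∧ k 2 % 2 ≠ k 0 % 2 ∧ residueChar (-(u 0 * u 1)) = -1 := by
  obtain ⟨k, u, hq⟩ := exists_equivalent_diagForm h2 hϖ hdet
  obtain ⟨σ, hmod, hle⟩ := exists_perm_mod_two_eq_and_le k
  have hqσ : q.Equivalent (diagForm ϖ (k ∘ σ) (u ∘ σ)) :=
    hq.trans (weightedSumSquares_comp_equiv_equivalent _ σ).symm
  have haniso := anisotropic_of_equivalent hqσ haniso
  exact ⟨k ∘ σ, u ∘ σ, hqσ, hle, hmod,
    fun h => not_anisotropic_diagForm_of_forall_mod_two_eq h2 hϖ.ne_zero hmod h.symm haniso,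
    residueChar_eq_neg_one_of_anisotropic h2 hϖ.ne_zero hmod haniso⟩

theorem exists_similarForm_normalForm (h2 : IsUnit (2 : R)) (hϖ : Irreducible ϖ)
    (hε : residueChar ε = -1) {q : QuadraticForm R (Fin 3 → R)} (hdet : (gramMatrix q).det ≠ 0)
    (haniso : q.Anisotropic) :
    ∃ e e' f w, e ≤ e' ∧ e % 2 = e' % 2 ∧ f % 2 ≠ e % 2 ∧ (w = 1 ∨ w = ε ∧ e < e') ∧
      SimilarForm q (normalForm ϖ ε e e' f w) := by
  obtain ⟨k, u, hq, hle, hmod, hf, hu⟩ :=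
    exists_equivalent_diagForm_of_anisotropic h2 hϖ hdet haniso
  have hsim (w : Rˣ) (hw : residueChar w = residueChar (u 0) * residueChar (u 2)) :
      SimilarForm q (normalForm ϖ ε (k 0) (k 1) (k 2) w) :=
    similarForm_equivalence.trans (similarForm_of_equivalent hq)
      (similarForm_normalForm_of_residueChar_eq h2 hε hu hw)
  obtain heq | hlt := hle.eq_or_lt
  · refine ⟨k 0, k 1, k 2, 1, hle, hmod, hf, .inl rfl, similarForm_equivalence.trans
      (hsim (u 0 * u 2) (map_mul ..)) (similarForm_equivalence.symm ?_)⟩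
    exact heq ▸ similarForm_normalForm_self h2 (k 0) (k 2) _
  · obtain hw | hw := Int.units_eq_one_or (residueChar (u 0) * residueChar (u 2))
    · exact ⟨_, _, _, 1, hle, hmod, hf, .inl rfl, hsim 1 ((map_one _).trans hw.symm)⟩
    · exact ⟨_, _, _, ε, hle, hmod, hf, .inr ⟨rfl, hlt⟩, hsim ε (hε.trans hw.symm)⟩

end HenselianDiscreteValuationRing

end NormalForms

section Counting

/-- The pairs `(a, b)` indexing the similarity classes of discriminant `ϖ ^ n`: the exponents of the
first two coefficients of a normal form in either order, the third exponent being `n - a - b`. -/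
def IsExponentPair (n : ℕ) (q : ℕ × ℕ) : Prop :=
  q.1 + q.2 ≤ n ∧ q.1 % 2 ≠ n % 2 ∧ q.2 % 2 ≠ n % 2

theorem card_isExponentPair (n : ℕ) :
    Nat.card {q // IsExponentPair n q} = ∑ s ∈ Finset.range ((n + 1) / 2), (s + 1) := by
  let halvesSigma : Finset (Σ _ : ℕ, ℕ) :=
    (Finset.range ((n + 1) / 2)).sigma fun s => Finset.range (s + 1)
  have mem_halvesSigma (x : Σ _ : ℕ, ℕ) :
      x ∈ halvesSigma ↔ x.1 < (n + 1) / 2 ∧ x.2 < x.1 + 1 := by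
    simp [halvesSigma]
  let halving : {q // IsExponentPair n q} ≃ halvesSigma :=
    { toFun := fun q => ⟨⟨q.1.1 / 2 + q.1.2 / 2, q.1.1 / 2⟩, by
        obtain ⟨⟨a, b⟩, hle, ha, hb⟩ := q
        rw [mem_halvesSigma]
        dsimp only at *
        omega⟩
      invFun := fun x => ⟨(2 * x.1.2 + (n + 1) % 2, 2 * (x.1.1 - x.1.2) + (n + 1) % 2), by
        obtain ⟨hs, hi⟩ := (mem_halvesSigma _).1 x.2
        dsimp only [IsExponentPair]
        omega⟩
      left_inv := by
        rintro ⟨⟨a, b⟩, hle, ha, hb⟩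
        dsimp only at *
        refine Subtype.ext (Prod.ext ?_ ?_) <;> dsimp only <;> omega
      right_inv := by
        rintro ⟨⟨s, i⟩, hx⟩
        obtain ⟨hs, hi⟩ := (mem_halvesSigma _).1 hx
        dsimp only at hs hi
        simp only [Subtype.mk.injEq, Sigma.mk.injEq, heq_eq_eq]
        omega }
  rw [Nat.card_congr halving, Nat.card_eq_fintype_card, Fintype.card_coe, Finset.card_sigma]
  simp only [Finset.card_range]

theorem sum_range_half_succ (n : ℕ) : ∑ s ∈ Finset.range ((n + 1) / 2), (s + 1) =
    if Odd n then (n ^ 2 + 4 * n + 3) / 8 else (n ^ 2 + 2 * n) / 8 := by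
  have hgauss (k : ℕ) : ∑ s ∈ Finset.range k, (s + 1) = (k + 1) * k / 2 := by
    have := Finset.sum_range_id (k + 1)
    rwa [Finset.sum_range_succ', add_zero, Nat.add_sub_cancel] at this
  rw [hgauss]
  split_ifs with h
  · obtain ⟨k, rfl⟩ := h
    rw [show (2 * k + 1 + 1) / 2 = k + 1 by omega,
      show (2 * k + 1) ^ 2 + 4 * (2 * k + 1) + 3 = 4 * ((k + 1 + 1) * (k + 1)) by ring]
    omega
  · obtain ⟨k, rfl⟩ := Nat.not_odd_iff_even.1 h
    rw [show (k + k + 1) / 2 = k by omega,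
      show (k + k) ^ 2 + 2 * (k + k) = 4 * ((k + 1) * k) by ring]
    omega

theorem card_quot_eq_card_of_representatives {α ι : Type*} {r : α → α → Prop} (hr : Equivalence r)
    (rep : ι → α) (hinj : ∀ i j, r (rep i) (rep j) → i = j) (hsurj : ∀ a, ∃ i, r a (rep i)) :
    Nat.card (Quot r) = Nat.card ι := by
  refine (Nat.card_congr (.ofBijective (fun i => Quot.mk r (rep i)) ⟨fun i j h => ?_, ?_⟩)).symm
  · exact hinj i j (hr.eqvGen_iff.1 (Quot.eqvGen_exact h))
  · rintro ⟨a⟩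
    obtain ⟨i, hi⟩ := hsurj a
    exact ⟨i, (Quot.sound hi).symm⟩

end Counting

section Representatives

/-- The normal form representing the similarity class indexed by the exponent pair `q`. The order
of `q.1` and `q.2` decides between `1` and `ε`, so that only one form is listed when they agree. -/
noncomputable def representative {R : Type*} [CommRing R] (ϖ : R) (ε : Rˣ) (n : ℕ) (q : ℕ × ℕ) :
    QuadraticForm R (Fin 3 → R) :=
  normalForm ϖ ε (min q.1 q.2) (max q.1 q.2) (n - (q.1 + q.2)) (if q.1 ≤ q.2 then 1 else ε)

theorem associated_det_gramMatrix_representative {R : Type*} [CommRing R] (h2 : IsUnit (2 : R))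
    {ϖ : R} {ε : Rˣ} {n : ℕ} {q : ℕ × ℕ} (hq : q.1 + q.2 ≤ n) :
    Associated (gramMatrix (representative ϖ ε n q)).det (ϖ ^ n) := by
  refine (associated_det_gramMatrix_normalForm h2).trans (.of_eq ?_)
  rw [min_add_max, Nat.add_sub_of_le hq]

section DiscreteValuationRing

variable {R : Type*} [CommRing R] [IsDomain R] [IsDiscreteValuationRing R]
  [Finite (ResidueField R)] {ϖ : R} {ε : Rˣ} {n : ℕ}

theorem anisotropic_representative (hϖ : Irreducible ϖ) (hε : residueChar ε = -1) {q : ℕ × ℕ}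
    (hq : IsExponentPair n q) : (representative ϖ ε n q).Anisotropic := by
  obtain ⟨hle, ha, hb⟩ := hq
  exact anisotropic_normalForm hϖ hε (by omega) (by omega) (by omega)

theorem eq_of_similarForm_representative (hϖ : Irreducible ϖ) (hε : residueChar ε = -1)
    {q q' : ℕ × ℕ} (hq : IsExponentPair n q) (hq' : IsExponentPair n q')
    (h : SimilarForm (representative ϖ ε n q) (representative ϖ ε n q')) : q = q' := by
  obtain ⟨a, b⟩ := q
  obtain ⟨a', b'⟩ := q'
  obtain ⟨hle, ha, hb⟩ := hq
  obtain ⟨hle', ha', hb'⟩ := hq'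
  dsimp only at *
  obtain ⟨hmin, hsum, hw⟩ := eq_of_similarForm_normalForm hϖ hε (by omega) (by omega) (by omega)
    (by omega) (by omega) (by omega) (by omega) h
  have horder (hne : a' ≠ b') : a ≤ b ↔ a' ≤ b' := by
    have hchar := hw (by grind)
    simp only [apply_ite, map_one, hε] at hchar
    have : (1 : ℤˣ) ≠ -1 := by decide
    grind
  grind

end DiscreteValuationRing

theorem exists_similarForm_representative {R : Type*} [CommRing R] [IsDomain R]
    [IsDiscreteValuationRing R] [HenselianRing R (maximalIdeal R)] [Finite (ResidueField R)]
    (h2 : IsUnit (2 : R)) {ϖ : R} (hϖ : Irreducible ϖ) {ε : Rˣ} (hε : residueChar ε = -1) {n : ℕ}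
    {g : QuadraticForm R (Fin 3 → R)} (haniso : g.Anisotropic)
    (hdet : Associated (gramMatrix g).det (ϖ ^ n)) :
    ∃ q, IsExponentPair n q ∧ SimilarForm g (representative ϖ ε n q) := by
  have hdet_ne := hdet.ne_zero_iff.2 (pow_ne_zero n hϖ.ne_zero)
  obtain ⟨e, e', f, w, hle, hmod, hf, hw, hsim⟩ :=
    exists_similarForm_normalForm h2 hϖ hε hdet_ne haniso
  have hsum : e + e' + f = n := by
    have hassoc : Associated (ϖ ^ (e + e' + f)) (ϖ ^ n) :=
      (associated_det_gramMatrix_normalForm h2).symm.trans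
        ((associated_det_gramMatrix_of_similarForm hsim).symm.trans hdet)
    exact le_antisymm ((pow_dvd_pow_iff hϖ.ne_zero hϖ.not_isUnit).1 hassoc.dvd)
      ((pow_dvd_pow_iff hϖ.ne_zero hϖ.not_isUnit).1 hassoc.symm.dvd)
  obtain rfl | ⟨rfl, hlt⟩ := hw
  · refine ⟨(e, e'), ⟨by grind, by grind, by grind⟩, ?_⟩
    convert hsim using 1
    rw [representative]
    congr <;> grind
  · refine ⟨(e', e), ⟨by grind, by grind, by grind⟩, ?_⟩
    convert hsim using 1
    rw [representative]
    congr <;> grind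

end Representatives

theorem stmt_17_general {R : Type*} [CommRing R] [IsDomain R] [IsDiscreteValuationRing R]
    [HenselianRing R (maximalIdeal R)] [Finite (ResidueField R)] (h2 : IsUnit (2 : R)) {ϖ : R}
    (hϖ : Irreducible ϖ) (n : ℕ) :
    Nat.card (Quot (fun (f g : {f : QuadraticForm R (Fin 3 → R) //
        (gramMatrix f).det ≠ 0 ∧ f.Anisotropic ∧
          Ideal.span {(gramMatrix f).det} = Ideal.span {ϖ ^ n}}) =>
      SimilarForm f.1 g.1)) =
      if Odd n then (n ^ 2 + 4 * n + 3) / 8 else (n ^ 2 + 2 * n) / 8 := by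
  obtain ⟨ε, hε⟩ := residueChar_surjective h2 (-1)
  have hrep (q : {q // IsExponentPair n q}) :=
    associated_det_gramMatrix_representative h2 (ϖ := ϖ) (ε := ε) q.2.1
  rw [← sum_range_half_succ, ← card_isExponentPair]
  refine card_quot_eq_card_of_representatives (similarForm_equivalence.comap Subtype.val)
    (fun q => ⟨representative ϖ ε n q, (hrep q).ne_zero_iff.2 (pow_ne_zero n hϖ.ne_zero),
      anisotropic_representative hϖ hε q.2, Ideal.span_singleton_eq_span_singleton.2 (hrep q)⟩)
    (fun q q' h => Subtype.ext (eq_of_similarForm_representative hϖ hε q.2 q'.2 h)) ?_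
  rintro ⟨f, -, haniso, hspan⟩
  obtain ⟨q, hq, hsim⟩ := exists_similarForm_representative h2 hϖ hε haniso
    (Ideal.span_singleton_eq_span_singleton.1 hspan)
  exact ⟨⟨q, hq⟩, hsim⟩

theorem isUnit_two_padicInt {p : ℕ} [Fact p.Prime] (hp : p ≠ 2) : IsUnit (2 : ℤ_[p]) := by
  by_contra h
  have hdvd : (p : ℤ) ∣ 2 :=
    (PadicInt.norm_int_lt_one_iff_dvd 2).1 (PadicInt.not_isUnit_iff.1 (by exact_mod_cast h))
  exact hp ((Nat.prime_dvd_prime_iff_eq Fact.out Nat.prime_two).1 (by exact_mod_cast hdvd))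

theorem stmt_17 (p : ℕ) [Fact p.Prime] (hp : p ≠ 2) (n : ℕ) :
    Nat.card (Quot (fun (f g : {f : QuadraticForm ℤ_[p] (Fin 3 → ℤ_[p]) //
        (gramMatrix f).det ≠ 0 ∧ f.Anisotropic ∧
          Ideal.span {(gramMatrix f).det} = Ideal.span {(p : ℤ_[p]) ^ n}}) =>
      SimilarForm f.1 g.1)) =
      if Odd n then (n ^ 2 + 4 * n + 3) / 8 else (n ^ 2 + 2 * n) / 8 := by
  exact stmt_17_general (isUnit_two_padicInt hp) PadicInt.irreducible_p n
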